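/- Let (Ω, F, P) be a probability space and g a random increasing homeomorphism of [0,1] (for each ω, g_ω : [0,1] → [0,1] is a strictly increasing continuous bijection with g_ω(0)=0, g_ω(1)=1, and ω ↦ g_ω(x) is measurable for each x). Assume that for every η ∈ (−1,1) with η ≠ 0 there exists C_η > 0 such that E[|g(I)|^η] ≤ C_η |I|^{2η−η²} for every dyadic interval I ⊆ [0,1]. Define Ẽ_{1/2} := {y ∈ [0,1) : liminf_{n→∞} log|g^{-1}(I_n(y))| / log 2^{−n} = 1/2}. Then almost surely the Lebesgue measure of g^{-1}([0,1) ∖ Ẽ_{1/2}) is zero. -/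

import Mathlib

/-!
For almost every `ω` and Lebesgue-almost every `x`, the dyadic intervals `I` of generation `m`
near `x` satisfy `|g(I)| = 2 ^ (-m (2 + o(1)))`. Indeed, the moment bound with `η = ±δ` shows that
`|g(I)| ^ η * 2 ^ (m (2 η - 2 η²))` has expectation `O(2 ^ (-m η²))`; summing over all dyadic
intervals, each weighted by the length of a neighbourhood of it, and using Tonelli's theorem, these
quantities are eventually at most one near almost every `x` (`ae_ae_eventually_le_one`,
`ae_ae_moment`, `ae_ae_goodAt`).

The rest is deterministic. Let `x` be such a point, `y = g(x)`, and `J = g⁻¹(I_n(y))`. If `J` is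
much longer than `2 ^ (-m)`, it contains a dyadic interval of generation `m` next to `x`, so that
`2 ^ (-n) ≥ 2 ^ (-m (2 + 2 δ))` (`le_of_long`); if it is shorter than `2 ^ (-m)`, it is covered by
two of them, so that `2 ^ (-n) ≤ 2 * 2 ^ (-m (2 - 2 δ))` (`le_of_short`). Hence
`|J| = 2 ^ (-n (1/2 + o(1)))` (`eventually_exponent`): the exponent is even a limit.
-/

open MeasureTheory Filter Set

/-- Left endpoint of the dyadic interval of generation `n` containing `x`. -/
noncomputable def dyadLeft (n : ℕ) (x : ℝ) : ℝ := (⌊x * 2 ^ n⌋ : ℝ) / 2 ^ n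

/-- Right endpoint of the dyadic interval of generation `n` containing `x`. -/
noncomputable def dyadRight (n : ℕ) (x : ℝ) : ℝ := ((⌊x * 2 ^ n⌋ : ℝ) + 1) / 2 ^ n

/-! ### Image sizes of dyadic intervals near a typical point -/

/-- A double Borel–Cantelli argument (over `ω` and over Lebesgue-a.e. `x`). If the expectations
of the weights `a m j`, `j < 2 ^ m`, are bounded by a summable sequence `K m`, then almost surely,
for a.e. `x`, all weights attached to intervals near `x` are eventually at most one. Integrating
first in `x` for fixed `ω` avoids any joint measurability. -/
lemma ae_ae_eventually_le_one {Ω : Type*} [MeasurableSpace Ω] (P : Measure Ω)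
    (a : ℕ → ℕ → Ω → ENNReal) (ha : ∀ m j, Measurable (a m j)) (K : ℕ → ENNReal)
    (hK : ∑' m, K m ≠ ⊤) (hint : ∀ m, ∀ j : ℕ, j < 2 ^ m → ∫⁻ ω, a m j ω ∂P ≤ K m) :
    ∀ᵐ ω ∂P, ∀ᵐ x : ℝ, ∀ᶠ m : ℕ in atTop, ∀ j : ℕ, j < 2 ^ m →
      x ∈ Icc (((j:ℝ) - 3) / 2 ^ m) (((j:ℝ) + 3) / 2 ^ m) → a m j ω ≤ 1 := by
  have hvol : ∀ m j : ℕ, volume (Icc (((j:ℝ) - 3) / 2 ^ m) (((j:ℝ) + 3) / 2 ^ m))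
      = ENNReal.ofReal (6 / 2 ^ m) := by
    intro m j
    rw [Real.volume_Icc]
    congr 1
    ring
  have hF : ∫⁻ ω, ∑' m, ∑ j ∈ Finset.range (2 ^ m),
      a m j ω * ENNReal.ofReal (6 / 2 ^ m) ∂P ≠ ⊤ := by
    rw [lintegral_tsum (fun m => (Finset.measurable_fun_sum _
      (fun j _ => (ha m j).mul_const _)).aemeasurable)]
    have hb : ∀ m, ∫⁻ ω, ∑ j ∈ Finset.range (2 ^ m),
        a m j ω * ENNReal.ofReal (6 / 2 ^ m) ∂P ≤ 6 * K m := by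
      intro m
      rw [lintegral_finsetSum _ (fun j _ => (ha m j).mul_const _)]
      calc _ ≤ ∑ j ∈ Finset.range (2 ^ m), K m * ENNReal.ofReal (6 / 2 ^ m) := by
            refine Finset.sum_le_sum fun j hj => ?_
            rw [lintegral_mul_const _ (ha m j)]
            gcongr
            exact hint m j (Finset.mem_range.1 hj)
        _ = 6 * K m := by
            rw [Finset.sum_const, Finset.card_range, nsmul_eq_mul, mul_left_comm, mul_comm]
            congr 1
            rw [← ENNReal.ofReal_natCast, ← ENNReal.ofReal_mul (by positivity)]
            push_cast
            rw [mul_div_cancel₀ _ (by positivity)]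
            norm_num
    refine ne_top_of_le_ne_top ?_ (ENNReal.tsum_le_tsum hb)
    rw [ENNReal.tsum_mul_left]
    exact ENNReal.mul_ne_top (by norm_num) hK
  have hFm : Measurable fun ω => ∑' m, ∑ j ∈ Finset.range (2 ^ m),
      a m j ω * ENNReal.ofReal (6 / 2 ^ m) :=
    Measurable.tsum (fun m => Finset.measurable_fun_sum _
      (fun j _ => (ha m j).mul_const _))
  filter_upwards [ae_lt_top hFm hF] with ω hω
  have hm : ∀ m, Measurable fun x : ℝ => ∑ j ∈ Finset.range (2 ^ m),
      (Icc (((j:ℝ) - 3) / 2 ^ m) (((j:ℝ) + 3) / 2 ^ m)).indicator (fun _ => a m j ω) x :=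
    fun m => Finset.measurable_fun_sum _
      (fun j _ => measurable_const.indicator measurableSet_Icc)
  have hG : ∫⁻ x : ℝ, ∑' m, ∑ j ∈ Finset.range (2 ^ m),
      (Icc (((j:ℝ) - 3) / 2 ^ m) (((j:ℝ) + 3) / 2 ^ m)).indicator (fun _ => a m j ω) x ≠ ⊤ := by
    rw [lintegral_tsum (fun m => (hm m).aemeasurable)]
    convert hω.ne using 3 with m
    rw [lintegral_finsetSum _ (fun j _ => measurable_const.indicator measurableSet_Icc)]
    refine Finset.sum_congr rfl fun j _ => ?_
    rw [lintegral_indicator_const measurableSet_Icc, hvol]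
  filter_upwards [ae_lt_top (Measurable.tsum hm) hG] with x hx
  have ht := ENNReal.tendsto_atTop_zero_of_tsum_ne_top hx.ne
  filter_upwards [ht.eventually (gt_mem_nhds (zero_lt_one))] with m hm1 j hj hxj
  refine le_trans ?_ hm1.le
  refine le_trans ?_ (Finset.single_le_sum
    (f := fun j : ℕ => (Icc (((j:ℝ) - 3) / 2 ^ m) (((j:ℝ) + 3) / 2 ^ m)).indicator
      (fun _ => a m j ω) x) (fun _ _ => zero_le) (Finset.mem_range.2 hj))
  rw [indicator_of_mem hxj]

/-- Every generation-`m` dyadic interval within distance about `2 ^ (-m)` of `x` has an image of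
length between `2 ^ (-m (2 + 2 δ))` and `2 ^ (-m (2 - 2 δ))`. -/
def GoodAt (f : ℝ → ℝ) (δ : ℝ) (m : ℕ) (x : ℝ) : Prop :=
  ∀ j : ℕ, j < 2 ^ m → x ∈ Icc (((j:ℝ) - 3) / 2 ^ m) (((j:ℝ) + 3) / 2 ^ m) →
    f (((j:ℝ) + 1) / 2 ^ m) - f ((j:ℝ) / 2 ^ m) ≤ (2:ℝ) ^ (-((m:ℝ) * (2 - 2 * δ))) ∧
    (2:ℝ) ^ (-((m:ℝ) * (2 + 2 * δ))) ≤ f (((j:ℝ) + 1) / 2 ^ m) - f ((j:ℝ) / 2 ^ m)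

lemma dyad_mem_Icc {m j : ℕ} (hj : j < 2 ^ m) :
    (j:ℝ) / 2 ^ m ∈ Icc (0:ℝ) 1 ∧ ((j:ℝ) + 1) / 2 ^ m ∈ Icc (0:ℝ) 1 ∧
      (j:ℝ) / 2 ^ m < ((j:ℝ) + 1) / 2 ^ m := by
  have h2 : (0:ℝ) < 2 ^ m := by positivity
  have h1 : (j:ℝ) + 1 ≤ 2 ^ m := by exact_mod_cast hj
  refine ⟨⟨by positivity, ?_⟩, ⟨by positivity, ?_⟩, ?_⟩
  · rw [div_le_one h2]; linarith
  · rw [div_le_one h2]; exact h1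
  · gcongr; linarith

/-- The moment bound at exponent `η` makes the normalised weights
`|g(I)| ^ η * 2 ^ (m (2 η - 2 η²))` eventually bounded near a.e. point: their expectations are at
most `C * 2 ^ (-m η²)`, which is summable. -/
lemma ae_ae_moment {Ω : Type*} [MeasurableSpace Ω] (P : Measure Ω)
    (g : Ω → ℝ → ℝ) (gmeas : ∀ x : ℝ, Measurable fun ω => g ω x) (η : ℝ) (hη : η ≠ 0)
    (hmom : ∃ C > (0:ℝ), ∀ n : ℕ, ∀ j : ℕ, j < 2 ^ n →
      (∫⁻ ω, ENNReal.ofReal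
          ((g ω (((j:ℝ) + 1) / 2 ^ n) - g ω ((j:ℝ) / 2 ^ n)) ^ η) ∂P) ≤
        ENNReal.ofReal (C * ((2:ℝ) ^ (-(n:ℝ))) ^ (2 * η - η ^ 2))) :
    ∀ᵐ ω ∂P, ∀ᵐ x : ℝ, ∀ᶠ m : ℕ in atTop, ∀ j : ℕ, j < 2 ^ m →
      x ∈ Icc (((j:ℝ) - 3) / 2 ^ m) (((j:ℝ) + 3) / 2 ^ m) →
      (g ω (((j:ℝ) + 1) / 2 ^ m) - g ω ((j:ℝ) / 2 ^ m)) ^ η ≤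
        (2:ℝ) ^ (-((m:ℝ) * (2 * η - 2 * η ^ 2))) := by
  obtain ⟨C, hC, h⟩ := hmom
  have hη2 : 0 < η ^ 2 := by positivity
  have hmeas : ∀ m j : ℕ, Measurable fun ω => ENNReal.ofReal
      ((g ω (((j:ℝ) + 1) / 2 ^ m) - g ω ((j:ℝ) / 2 ^ m)) ^ η) := fun m j =>
    (((gmeas _).sub (gmeas _)).pow_const η).ennreal_ofReal
  have key := ae_ae_eventually_le_one P
    (fun m j ω => ENNReal.ofReal
      ((g ω (((j:ℝ) + 1) / 2 ^ m) - g ω ((j:ℝ) / 2 ^ m)) ^ η) *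
        ENNReal.ofReal ((2:ℝ) ^ ((m:ℝ) * (2 * η - 2 * η ^ 2))))
    (fun m j => (hmeas m j).mul_const _)
    (fun m => ENNReal.ofReal (C * ((2:ℝ) ^ (-(η ^ 2))) ^ m)) ?_ ?_
  · filter_upwards [key] with ω hω
    filter_upwards [hω] with x hx
    filter_upwards [hx] with m hm j hj hxj
    have h1 := hm j hj hxj
    have hpos : (0:ℝ) < (2:ℝ) ^ ((m:ℝ) * (2 * η - 2 * η ^ 2)) := by positivity
    rw [← ENNReal.ofReal_mul' hpos.le, ENNReal.ofReal_le_one] at h1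
    rw [Real.rpow_neg (by norm_num), ← one_div, le_div_iff₀ hpos]
    exact h1
  · have hs : Summable fun m : ℕ => C * ((2:ℝ) ^ (-(η ^ 2))) ^ m := by
      refine (summable_geometric_of_lt_one (by positivity) ?_).mul_left C
      exact Real.rpow_lt_one_of_one_lt_of_neg (by norm_num) (by linarith)
    exact hs.tsum_ofReal_ne_top
  · intro m j hj
    rw [lintegral_mul_const _ (hmeas m j)]
    refine (mul_le_mul_left (h m j hj) _).trans (le_of_eq ?_)
    rw [← ENNReal.ofReal_mul (by positivity)]
    congr 1
    rw [mul_assoc, ← Real.rpow_mul (by norm_num), ← Real.rpow_add (by norm_num),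
      ← Real.rpow_natCast (2 ^ (-η ^ 2)) m, ← Real.rpow_mul (by norm_num)]
    congr 2
    ring

/-- The exponents `η = δ` and `η = -δ` give the two bounds of `GoodAt`. -/
lemma ae_ae_goodAt {Ω : Type*} [MeasurableSpace Ω] (P : Measure Ω)
    (g : Ω → ℝ → ℝ) (hmono : ∀ ω, StrictMonoOn (g ω) (Icc 0 1))
    (gmeas : ∀ x : ℝ, Measurable fun ω => g ω x)
    (hmom : ∀ η ∈ Ioo (-1:ℝ) 1, η ≠ 0 → ∃ C > (0:ℝ), ∀ n : ℕ, ∀ j : ℕ, j < 2 ^ n →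
      (∫⁻ ω, ENNReal.ofReal
          ((g ω (((j:ℝ) + 1) / 2 ^ n) - g ω ((j:ℝ) / 2 ^ n)) ^ η) ∂P) ≤
        ENNReal.ofReal (C * ((2:ℝ) ^ (-(n:ℝ))) ^ (2 * η - η ^ 2)))
    (δ : ℝ) (h0 : 0 < δ) (h1 : δ < 1) :
    ∀ᵐ ω ∂P, ∀ᵐ x : ℝ, ∀ᶠ m : ℕ in atTop, GoodAt (g ω) δ m x := by
  have hp := ae_ae_moment P g gmeas δ h0.ne' (hmom δ ⟨by linarith, h1⟩ h0.ne')
  have hn := ae_ae_moment P g gmeas (-δ) (by linarith)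
    (hmom (-δ) ⟨by linarith, by linarith⟩ (by linarith))
  filter_upwards [hp, hn] with ω hp hn
  filter_upwards [hp, hn] with x hp hn
  filter_upwards [hp, hn] with m hp hn j hj hxj
  obtain ⟨ha, hb, hlt⟩ := dyad_mem_Icc hj
  have hΔ := sub_pos.2 (hmono ω ha hb hlt)
  have hp := hp j hj hxj
  have hn := hn j hj hxj
  set Δ := g ω (((j:ℝ) + 1) / 2 ^ m) - g ω ((j:ℝ) / 2 ^ m)
  constructor
  · rw [← Real.rpow_le_rpow_iff hΔ.le (by positivity) h0, ← Real.rpow_mul (by norm_num)]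
    convert hp using 2
    ring
  · rw [← Real.rpow_le_rpow_iff_of_neg hΔ (by positivity) (neg_lt_zero.2 h0),
      ← Real.rpow_mul (by norm_num)]
    convert hn using 2
    ring

/-! ### Size of preimages at a good point -/

section Deterministic

variable {f : ℝ → ℝ} {δ a b x : ℝ} {m n : ℕ}

/-- A preimage of an interval of length `2 ^ (-n)` that contains `x` and is at least
`4 * 2 ^ (-m)` long contains one of the two dyadic neighbours of the interval around `x`, whose
image is not small. -/
lemma le_of_long (hf : MonotoneOn f (Icc 0 1)) (hg : GoodAt f δ m x)
    (ha : 0 ≤ a) (hax : a ≤ x) (hxb : x ≤ b) (hb : b ≤ 1)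
    (hab : f b - f a = (2:ℝ) ^ (-(n:ℝ))) (hlong : 4 / 2 ^ m ≤ b - a) :
    (n:ℝ) ≤ m * (2 + 2 * δ) := by
  have h2 : (0:ℝ) < 2 ^ m := by positivity
  -- It suffices to exhibit a dyadic interval near `x` contained in `[a, b]`.
  suffices h : ∃ j : ℕ, a * 2 ^ m ≤ j ∧ (j:ℝ) + 1 ≤ b * 2 ^ m ∧
      (j:ℝ) - 3 ≤ x * 2 ^ m ∧ x * 2 ^ m ≤ j + 3 by
    obtain ⟨j, hj1, hj2, hj3, hj4⟩ := h
    have hj : j < 2 ^ m := by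
      have : (j:ℝ) + 1 ≤ 2 ^ m := hj2.trans (by nlinarith)
      exact_mod_cast this
    obtain ⟨hA, hB, -⟩ := dyad_mem_Icc hj
    have hΔ := (hg j hj ⟨by rwa [div_le_iff₀ h2], by rwa [le_div_iff₀ h2]⟩).2
    have h3 : f a ≤ f ((j:ℝ) / 2 ^ m) :=
      hf ⟨ha, by linarith⟩ hA (by rwa [le_div_iff₀ h2])
    have h4 : f (((j:ℝ) + 1) / 2 ^ m) ≤ f b :=
      hf hB ⟨by linarith, hb⟩ (by rwa [div_le_iff₀ h2])
    have h5 : (2:ℝ) ^ (-((m:ℝ) * (2 + 2 * δ))) ≤ (2:ℝ) ^ (-(n:ℝ)) := by linarith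
    rw [Real.rpow_le_rpow_left_iff (by norm_num)] at h5
    linarith
  rw [div_le_iff₀ h2] at hlong
  have ha' : 0 ≤ a * 2 ^ m := by positivity
  have hx' : 0 ≤ x * 2 ^ m := ha'.trans (by gcongr)
  have hax' : a * 2 ^ m ≤ x * 2 ^ m := by gcongr
  have hxb' : x * 2 ^ m ≤ b * 2 ^ m := by gcongr
  have hl := Nat.floor_le hx'
  have hu := Nat.lt_floor_add_one (x * 2 ^ m)
  by_cases hc : 2 ≤ x * 2 ^ m - a * 2 ^ m
  · have h1 : 1 ≤ ⌊x * 2 ^ m⌋₊ := Nat.le_floor (by push_cast; linarith)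
    refine ⟨⌊x * 2 ^ m⌋₊ - 1, ?_⟩
    push_cast [h1]
    refine ⟨?_, ?_, ?_, ?_⟩ <;> linarith
  · refine ⟨⌊x * 2 ^ m⌋₊ + 1, ?_⟩
    push_cast
    refine ⟨?_, ?_, ?_, ?_⟩ <;> linarith

/-- A preimage of an interval of length `2 ^ (-n)` that contains `x` and is shorter than
`2 ^ (-m)` is covered by two adjacent dyadic intervals near `x`, whose images are not large. -/
lemma le_of_short (hf : MonotoneOn f (Icc 0 1)) (hg : GoodAt f δ m x)
    (ha : 0 ≤ a) (hax : a ≤ x) (hxb : x ≤ b) (hb : b ≤ 1) (ha1 : a < 1)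
    (hab : f b - f a = (2:ℝ) ^ (-(n:ℝ))) (hshort : b - a < 1 / 2 ^ m) :
    m * (2 - 2 * δ) ≤ (n:ℝ) + 1 := by
  have h2 : (0:ℝ) < 2 ^ m := by positivity
  rw [lt_div_iff₀ h2] at hshort
  have ha' : 0 ≤ a * 2 ^ m := by positivity
  have hax' : a * 2 ^ m ≤ x * 2 ^ m := by gcongr
  have hxb' : x * 2 ^ m ≤ b * 2 ^ m := by gcongr
  have hl := Nat.floor_le ha'
  have hu := Nat.lt_floor_add_one (a * 2 ^ m)
  set i := ⌊a * 2 ^ m⌋₊ with hi_def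
  have hi : i < 2 ^ m := by
    have : (i:ℝ) < 2 ^ m := hl.trans_lt (by nlinarith)
    exact_mod_cast this
  obtain ⟨hA, hB, -⟩ := dyad_mem_Icc hi
  have hΔ := (hg i hi ⟨by rw [div_le_iff₀ h2]; linarith, by rw [le_div_iff₀ h2]; linarith⟩).1
  have h3 : f ((i:ℝ) / 2 ^ m) ≤ f a :=
    hf hA ⟨ha, by linarith⟩ (by rwa [div_le_iff₀ h2])
  have hpos : (0:ℝ) < (2:ℝ) ^ (-((m:ℝ) * (2 - 2 * δ))) := by positivity
  have hbmem : b ∈ Icc (0:ℝ) 1 := ⟨by linarith, hb⟩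
  have h5 : f b - f a ≤ 2 * (2:ℝ) ^ (-((m:ℝ) * (2 - 2 * δ))) := by
    by_cases hi1 : i + 1 < 2 ^ m
    · obtain ⟨hA', hB', -⟩ := dyad_mem_Icc hi1
      have hΔ' := (hg (i + 1) hi1 ⟨by rw [div_le_iff₀ h2]; push_cast; linarith,
        by rw [le_div_iff₀ h2]; push_cast; linarith⟩).1
      have h4 := hf hbmem hB' (by rw [le_div_iff₀ h2]; push_cast; linarith)
      push_cast at hΔ' h4
      linarith
    · -- The interval of index `i` is the last one, so it alone covers `[a, b]`.
      have : (2:ℝ) ^ m ≤ i + 1 := by exact_mod_cast not_lt.1 hi1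
      have h4 := hf hbmem hB (by rw [le_div_iff₀ h2]; nlinarith)
      linarith
  have h6 : (2:ℝ) ^ (-(n:ℝ)) ≤ (2:ℝ) ^ (1 + -((m:ℝ) * (2 - 2 * δ))) := by
    rw [Real.rpow_add (by norm_num), Real.rpow_one, ← hab]
    exact h5
  rw [Real.rpow_le_rpow_left_iff (by norm_num)] at h6
  linarith

/-- At a point which is eventually `GoodAt` level `m`, the preimages of intervals of length
`2 ^ (-n)` have size exponent `1/2` up to an error `2 δ`. -/
lemma eventually_exponent (hf : MonotoneOn f (Icc 0 1)) (h0 : 0 < δ) (h1 : δ < 1 / 2)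
    (hg : ∀ᶠ m : ℕ in atTop, GoodAt f δ m x) (a b : ℕ → ℝ)
    (hab : ∀ n, 0 ≤ a n ∧ a n ≤ x ∧ x ≤ b n ∧ b n ≤ 1 ∧ a n < b n ∧
      f (b n) - f (a n) = (2:ℝ) ^ (-(n:ℝ))) :
    ∀ᶠ n : ℕ in atTop,
      1 / 2 - 2 * δ < Real.log (b n - a n) / Real.log ((2:ℝ) ^ (-(n:ℝ))) ∧
      Real.log (b n - a n) / Real.log ((2:ℝ) ^ (-(n:ℝ))) < 1 / 2 + 2 * δ := by
  -- The scales `n (1/2 - δ)` and `n (1/2 + δ) + 2` violate the conclusions of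
  -- `le_of_long` and `le_of_short` respectively.
  have ht1 : Tendsto (fun n : ℕ => ⌊(n:ℝ) * (1 / 2 - δ)⌋₊) atTop atTop :=
    tendsto_nat_floor_atTop.comp
      (tendsto_natCast_atTop_atTop.atTop_mul_const (by linarith))
  have ht2 : Tendsto (fun n : ℕ => ⌈(n:ℝ) * (1 / 2 + δ)⌉₊ + 2) atTop atTop :=
    tendsto_atTop_mono (fun _ => Nat.le_add_right _ _) (tendsto_nat_ceil_atTop.comp
      (tendsto_natCast_atTop_atTop.atTop_mul_const
        (show (0:ℝ) < 1 / 2 + δ by linarith)))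
  have hbig : ∀ᶠ n : ℕ in atTop, 3 / δ < (n:ℝ) :=
    tendsto_natCast_atTop_atTop.eventually_gt_atTop _
  filter_upwards [ht1.eventually hg, ht2.eventually hg, hbig] with n hg1 hg2 hn
  obtain ⟨ha, hax, hxb, hb, hlt, hfab⟩ := hab n
  have hn0 : (0:ℝ) < n := lt_trans (by positivity) hn
  rw [div_lt_iff₀ h0] at hn
  have hL : 0 < Real.log 2 := Real.log_pos (by norm_num)
  have hh : 0 < b n - a n := sub_pos.2 hlt
  have hratio : Real.log (b n - a n) / Real.log ((2:ℝ) ^ (-(n:ℝ)))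
      = -Real.logb 2 (b n - a n) / n := by
    rw [Real.log_rpow (by norm_num), Real.logb]
    field_simp
  rw [hratio, lt_div_iff₀ hn0, div_lt_iff₀ hn0]
  constructor
  · set m := ⌊(n:ℝ) * (1 / 2 - δ)⌋₊
    have hml : (m:ℝ) ≤ n * (1 / 2 - δ) :=
      Nat.floor_le (mul_nonneg hn0.le (by linarith))
    have hmu : n * (1 / 2 - δ) < (m:ℝ) + 1 := Nat.lt_floor_add_one _
    have hs : b n - a n < (2:ℝ) ^ (2 - (m:ℝ)) := by
      by_contra! hc
      have := le_of_long hf hg1 ha hax hxb hb hfab (by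
        refine le_trans (le_of_eq ?_) hc
        rw [Real.rpow_sub (by norm_num), Real.rpow_natCast]
        norm_num)
      have h3 : (m:ℝ) * (2 + 2 * δ) ≤ n * (1 / 2 - δ) * (2 + 2 * δ) := by gcongr
      nlinarith [mul_pos hn0 h0, mul_pos (mul_pos hn0 h0) h0]
    rw [← Real.logb_lt_iff_lt_rpow (by norm_num) hh] at hs
    nlinarith
  · set m := ⌈(n:ℝ) * (1 / 2 + δ)⌉₊ + 2 with hm
    have hml : n * (1 / 2 + δ) + 2 ≤ (m:ℝ) := by
      rw [hm]; push_cast; linarith [Nat.le_ceil ((n:ℝ) * (1 / 2 + δ))]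
    have hmu : (m:ℝ) < n * (1 / 2 + δ) + 3 := by
      rw [hm]; push_cast
      linarith [Nat.ceil_lt_add_one (show 0 ≤ (n:ℝ) * (1 / 2 + δ) by positivity)]
    have hs : (2:ℝ) ^ (-(m:ℝ)) ≤ b n - a n := by
      by_contra! hc
      have := le_of_short hf hg2 ha hax hxb hb (by linarith) hfab (by
        refine lt_of_lt_of_eq hc ?_
        rw [Real.rpow_neg (by norm_num), Real.rpow_natCast, one_div])
      have h3 : (n * (1 / 2 + δ) + 2) * (2 - 2 * δ) ≤ (m:ℝ) * (2 - 2 * δ) :=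
        mul_le_mul_of_nonneg_right hml (by linarith)
      nlinarith [mul_pos (mul_pos hn0 h0) (sub_pos.2 h1)]
    rw [← Real.le_logb_iff_rpow_le (by norm_num) hh] at hs
    nlinarith

end Deterministic

/-! ### The almost sure statement -/

lemma dyad_bounds {y : ℝ} (hy : y ∈ Ico (0:ℝ) 1) (n : ℕ) :
    0 ≤ dyadLeft n y ∧ dyadLeft n y ≤ y ∧ y < dyadRight n y ∧ dyadRight n y ≤ 1 ∧
      dyadRight n y - dyadLeft n y = (2:ℝ) ^ (-(n:ℝ)) := by
  have h2 : (0:ℝ) < 2 ^ n := by positivity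
  have hy0 : 0 ≤ y * 2 ^ n := mul_nonneg hy.1 h2.le
  unfold dyadLeft dyadRight
  refine ⟨?_, ?_, ?_, ?_, ?_⟩
  · have : 0 ≤ ⌊y * 2 ^ n⌋ := Int.floor_nonneg.2 hy0
    have : (0:ℝ) ≤ ⌊y * 2 ^ n⌋ := by exact_mod_cast this
    positivity
  · rw [div_le_iff₀ h2]; exact Int.floor_le _
  · rw [lt_div_iff₀ h2]; exact Int.lt_floor_add_one _
  · rw [div_le_one h2]
    have h : ⌊y * 2 ^ n⌋ < 2 ^ n := by
      rw [Int.floor_lt]; push_cast; nlinarith [hy.2]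
    exact_mod_cast h
  · rw [Real.rpow_neg (by norm_num), Real.rpow_natCast]
    field_simp
    ring

/-- The conclusion under the moment bounds for the genuine dyadic intervals only, that is, for
natural indices `j`. In `stmt18` the index `j` elaborates as a real number, so the hypothesis
there also covers translates of dyadic intervals. -/
theorem exponent_half_of_moments {Ω : Type*} [MeasurableSpace Ω] (P : Measure Ω) [IsProbabilityMeasure P]
    (g ginv : Ω → ℝ → ℝ)
    (ghomeo : ∀ ω, StrictMonoOn (g ω) (Icc 0 1) ∧ ContinuousOn (g ω) (Icc 0 1) ∧
      g ω 0 = 0 ∧ g ω 1 = 1)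
    (gmeas : ∀ x : ℝ, Measurable fun ω => g ω x)
    (ginv_spec : ∀ ω, ∀ x ∈ Icc (0:ℝ) 1, ginv ω (g ω x) = x ∧ g ω (ginv ω x) = x)
    (hmom : ∀ η ∈ Ioo (-1:ℝ) 1, η ≠ 0 → ∃ C > (0:ℝ), ∀ n : ℕ, ∀ j : ℕ, j < 2 ^ n →
      (∫⁻ ω, ENNReal.ofReal
          ((g ω (((j:ℝ) + 1) / 2 ^ n) - g ω ((j:ℝ) / 2 ^ n)) ^ η) ∂P) ≤
        ENNReal.ofReal (C * ((2:ℝ) ^ (-(n:ℝ))) ^ (2 * η - η ^ 2))) :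
    ∀ᵐ ω ∂P,
      volume (ginv ω ''
        (Ico (0:ℝ) 1 \
          {y ∈ Ico (0:ℝ) 1 |
            (∀ ε > (0:ℝ), ∀ᶠ n : ℕ in atTop,
              1/2 - ε <
                Real.log (ginv ω (dyadRight n y) - ginv ω (dyadLeft n y)) /
                  Real.log ((2:ℝ) ^ (-(n:ℝ)))) ∧
            (∀ ε > (0:ℝ), ∃ᶠ n : ℕ in atTop,
              Real.log (ginv ω (dyadRight n y) - ginv ω (dyadLeft n y)) /
                  Real.log ((2:ℝ) ^ (-(n:ℝ))) < 1/2 + ε)})) = 0 := by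
  -- Countably many `δ` suffice.
  have hδ : ∀ k : ℕ, (0:ℝ) < 1 / ((k:ℝ) + 3) ∧ 1 / ((k:ℝ) + 3) < 1 / 2 := fun k => by
    have : (0:ℝ) ≤ k := k.cast_nonneg
    refine ⟨by positivity, ?_⟩
    gcongr
    linarith
  have hall := ae_all_iff.2 fun k : ℕ =>
    ae_ae_goodAt P g (fun ω => (ghomeo ω).1) gmeas hmom (1 / ((k:ℝ) + 3)) (hδ k).1
      (by linarith [(hδ k).2])
  filter_upwards [hall] with ω hω
  obtain ⟨hmono, hcont, hg0, hg1⟩ := ghomeo ω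
  refine measure_mono_null ?_ (ae_iff.1 (ae_all_iff.2 hω))
  rintro _ ⟨y, ⟨hy, hyE⟩, rfl⟩ hgood
  refine hyE ⟨hy, ?_⟩
  have hinv : ∀ z ∈ Icc (0:ℝ) 1, ginv ω z ∈ Icc (0:ℝ) 1 := by
    intro z hz
    obtain ⟨x, hx, rfl⟩ := intermediate_value_Icc zero_le_one hcont
      (show z ∈ Icc (g ω 0) (g ω 1) by rwa [hg0, hg1])
    rw [(ginv_spec ω x hx).1]
    exact hx
  have hinv_lt : ∀ z ∈ Icc (0:ℝ) 1, ∀ w ∈ Icc (0:ℝ) 1, (ginv ω z < ginv ω w ↔ z < w) := by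
    intro z hz w hw
    rw [← hmono.lt_iff_lt (hinv z hz) (hinv w hw), (ginv_spec ω z hz).2, (ginv_spec ω w hw).2]
  have hyI : y ∈ Icc (0:ℝ) 1 := ⟨hy.1, hy.2.le⟩
  have hexp : ∀ ε > (0:ℝ), ∀ᶠ n : ℕ in atTop,
      1 / 2 - ε < Real.log (ginv ω (dyadRight n y) - ginv ω (dyadLeft n y)) /
        Real.log ((2:ℝ) ^ (-(n:ℝ))) ∧
      Real.log (ginv ω (dyadRight n y) - ginv ω (dyadLeft n y)) /
        Real.log ((2:ℝ) ^ (-(n:ℝ))) < 1 / 2 + ε := by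
    intro ε hε
    obtain ⟨k, hk⟩ := exists_nat_one_div_lt (show (0:ℝ) < ε / 2 by positivity)
    have hk' : 1 / ((k:ℝ) + 3) ≤ 1 / ((k:ℝ) + 1) := by gcongr; norm_num
    refine (eventually_exponent hmono.monotoneOn (hδ k).1 (hδ k).2 (hgood k)
      (fun n => ginv ω (dyadLeft n y)) (fun n => ginv ω (dyadRight n y)) ?_).mono ?_
    · intro n
      obtain ⟨h1, h2, h3, h4, h5⟩ := dyad_bounds hy n
      have hl : dyadLeft n y ∈ Icc (0:ℝ) 1 := ⟨h1, by linarith⟩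
      have hr : dyadRight n y ∈ Icc (0:ℝ) 1 := ⟨by linarith, h4⟩
      refine ⟨(hinv _ hl).1, ?_, ((hinv_lt _ hyI _ hr).2 h3).le, (hinv _ hr).2,
        (hinv_lt _ hl _ hr).2 (by linarith), ?_⟩
      · exact not_lt.1 fun h => absurd ((hinv_lt _ hyI _ hl).1 h) (not_lt.2 h2)
      · rw [(ginv_spec ω _ hl).2, (ginv_spec ω _ hr).2, h5]
    · rintro n ⟨h1, h2⟩
      constructor <;> linarith
  exact ⟨fun ε hε => (hexp ε hε).mono fun n h => h.1,
    fun ε hε => ((hexp ε hε).mono fun n h => h.2).frequently⟩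

/-- Second claim of Lemma 3.3 in abstract form: let `g` be a random increasing homeomorphism
of `[0,1]` with inverse `ginv`, satisfying the moment bounds
`E[|g(I)|^η] ≤ C_η |I|^{2η-η²}` for all `η ∈ (-1,1) ∖ {0}` and all dyadic intervals `I`.
Let `Ẽ_{1/2}` be the set of `y ∈ [0,1)` where
`liminf_n log|g⁻¹(I_n(y))| / log 2^{-n} = 1/2` (expressed below by the equivalent pair of
conditions: for every `ε > 0`, eventually the ratio exceeds `1/2 - ε` and frequently it is
below `1/2 + ε`). Then almost surely `g⁻¹([0,1) ∖ Ẽ_{1/2})` has Lebesgue measure zero. -/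
theorem stmt18 {Ω : Type*} [MeasurableSpace Ω] (P : Measure Ω) [IsProbabilityMeasure P]
    (g ginv : Ω → ℝ → ℝ)
    (ghomeo : ∀ ω, StrictMonoOn (g ω) (Icc 0 1) ∧ ContinuousOn (g ω) (Icc 0 1) ∧
      g ω 0 = 0 ∧ g ω 1 = 1)
    (gmeas : ∀ x : ℝ, Measurable fun ω => g ω x)
    (ginv_spec : ∀ ω, ∀ x ∈ Icc (0:ℝ) 1, ginv ω (g ω x) = x ∧ g ω (ginv ω x) = x)
    (hmom : ∀ η ∈ Ioo (-1:ℝ) 1, η ≠ 0 → ∃ C > (0:ℝ), ∀ n : ℕ, ∀ j < 2 ^ n,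
      (∫⁻ ω, ENNReal.ofReal
          ((g ω (((j:ℝ) + 1) / 2 ^ n) - g ω ((j:ℝ) / 2 ^ n)) ^ η) ∂P) ≤
        ENNReal.ofReal (C * ((2:ℝ) ^ (-(n:ℝ))) ^ (2 * η - η ^ 2))) :
    ∀ᵐ ω ∂P,
      volume (ginv ω ''
        (Ico (0:ℝ) 1 \
          {y ∈ Ico (0:ℝ) 1 |
            (∀ ε > (0:ℝ), ∀ᶠ n : ℕ in atTop,
              1/2 - ε <
                Real.log (ginv ω (dyadRight n y) - ginv ω (dyadLeft n y)) /
                  Real.log ((2:ℝ) ^ (-(n:ℝ)))) ∧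
            (∀ ε > (0:ℝ), ∃ᶠ n : ℕ in atTop,
              Real.log (ginv ω (dyadRight n y) - ginv ω (dyadLeft n y)) /
                  Real.log ((2:ℝ) ^ (-(n:ℝ))) < 1/2 + ε)})) = 0 := by
  -- Specialise the real index of the moment bound to natural numbers.
  refine exponent_half_of_moments P g ginv ghomeo gmeas ginv_spec fun η hη hη0 => ?_
  obtain ⟨C, hC, h⟩ := hmom η hη hη0
  exact ⟨C, hC, fun n j hj => h n j (by exact_mod_cast hj)⟩
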